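/- Set a = √(1/2), b = √(3/2), c = √2, and weights W₀ = π²/4, W₁ = π²/12, W₂ = π²/36. Consider the 16 nodes in ℝ⁴: the origin with weight W₀; the six points (0,0,0,−c), (0,0,c,0), (b,0,−a,0), (−b,0,−a,0), (0,b,0,a), (0,−b,0,a), each with weight W₁; and the nine points (b,b,a,−a), (b,−b,a,−a), (−b,b,a,−a), (−b,−b,a,−a), (0,b,−c,−a), (0,−b,−c,−a), (b,0,a,c), (−b,0,a,c), (0,0,−c,c), each with weight W₂. Then Σ W_i p(x_i) = ∫_{ℝ⁴} e^{−‖x‖²} p(x) dx for every real polynomial p in 4 variables of total degree at most 4. -/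

import Mathlib

/-!
Both sides are linear in `q`, so it suffices to treat a monomial `∏ i, x i ^ d i` with `∑ i, d i ≤ 4`.
On the integral side Fubini factors the integral into one-dimensional Gaussian moments
`∫ t ^ k * exp (-t ^ 2)`, which integration by parts reduces to `√π` (even `k`) or to `0` (odd `k`);
see `integral_pow_mul_exp`. On the cubature side `c = 2 * a`, `a ^ 2 = 1 / 2` and `b ^ 2 = 3 / 2`
reduce the claim for each of the finitely many exponent vectors to rational arithmetic, odd powers of
`a` and `b` cancelling; see `cubature_monomial`.
-/

open MeasureTheory

/-- The `k`-th moment of the probability density `exp (-t ^ 2) / √π`, given by its recursion. -/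
noncomputable def gaussMoment : ℕ → ℝ
  | 0 => 1
  | 1 => 0
  | k + 2 => (k + 1) / 2 * gaussMoment k

lemma integrable_pow_mul_exp (k : ℕ) :
    Integrable fun t : ℝ => t ^ k * Real.exp (-t ^ 2) := by
  have h := integrable_rpow_mul_exp_neg_mul_sq (b := 1) one_pos (s := k)
    (by linarith [(Nat.cast_nonneg k : (0 : ℝ) ≤ k)])
  simpa using h

lemma integral_pow_mul_exp (k : ℕ) :
    ∫ t : ℝ, t ^ k * Real.exp (-t ^ 2) = √Real.pi * gaussMoment k := by
  have hexp : ∀ t : ℝ, HasDerivAt (fun t : ℝ => Real.exp (-t ^ 2))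
      (Real.exp (-t ^ 2) * (-(2 * t))) t := fun t => by
    simpa using ((hasDerivAt_pow 2 t).neg).exp
  induction k using Nat.twoStepInduction with
  | zero => simpa [gaussMoment] using integral_gaussian 1
  | one =>
    have h := integral_eq_zero_of_hasDerivAt_of_integrable hexp
      (((integrable_pow_mul_exp 1).const_mul (-2)).congr
        (Filter.Eventually.of_forall fun t => by simp only; ring))
      (by simpa using integrable_pow_mul_exp 0)
    have h' : ∫ t : ℝ, Real.exp (-t ^ 2) * (-(2 * t))
        = -2 * ∫ t : ℝ, t ^ 1 * Real.exp (-t ^ 2) := by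
      rw [← integral_const_mul]
      exact integral_congr_ae (Filter.Eventually.of_forall fun t => by simp only; ring)
    rw [h] at h'
    simp only [gaussMoment]
    linarith
  | more k ih _ =>
    -- The derivative of `t ^ (k + 1) * exp (-t ^ 2)` integrates to `0`.
    have hd : ∀ t : ℝ, HasDerivAt (fun t : ℝ => t ^ (k + 1) * Real.exp (-t ^ 2))
        ((k + 1) * (t ^ k * Real.exp (-t ^ 2)) - 2 * (t ^ (k + 2) * Real.exp (-t ^ 2))) t :=
      fun t => by
        refine ((hasDerivAt_pow (k + 1) t).mul (hexp t)).congr_deriv ?_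
        push_cast
        ring
    have i1 := (integrable_pow_mul_exp k).const_mul ((k : ℝ) + 1)
    have i2 := (integrable_pow_mul_exp (k + 2)).const_mul 2
    have h := integral_eq_zero_of_hasDerivAt_of_integrable hd (i1.sub i2)
      (integrable_pow_mul_exp (k + 1))
    rw [integral_sub i1 i2, integral_const_mul, integral_const_mul, ih] at h
    simp only [gaussMoment]
    linarith

lemma exp_mul_monomial (d : Fin 4 → ℕ) (x : Fin 4 → ℝ) :
    Real.exp (-(∑ t, x t ^ 2)) * ∏ i, x i ^ d i
      = ∏ i, (x i ^ d i * Real.exp (-x i ^ 2)) := by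
  rw [Finset.prod_mul_distrib, ← Real.exp_sum, Finset.sum_neg_distrib, mul_comm]

lemma integrable_exp_mul_monomial (d : Fin 4 → ℕ) :
    Integrable fun x : Fin 4 → ℝ => Real.exp (-(∑ t, x t ^ 2)) * ∏ i, x i ^ d i := by
  simp only [exp_mul_monomial]
  exact Integrable.fintype_prod (f := fun i (t : ℝ) => t ^ d i * Real.exp (-t ^ 2))
    fun i => integrable_pow_mul_exp (d i)

lemma integral_exp_mul_monomial (d : Fin 4 → ℕ) :
    ∫ x : Fin 4 → ℝ, Real.exp (-(∑ t, x t ^ 2)) * ∏ i, x i ^ d i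
      = Real.pi ^ 2 * ∏ i, gaussMoment (d i) := by
  simp only [exp_mul_monomial]
  rw [integral_fintype_prod_volume_eq_prod (fun i (t : ℝ) => t ^ d i * Real.exp (-t ^ 2))]
  simp only [integral_pow_mul_exp, Finset.prod_mul_distrib, Finset.prod_const, Finset.card_univ,
    Fintype.card_fin]
  rw [show √Real.pi ^ 4 = (√Real.pi ^ 2) ^ 2 by ring, Real.sq_sqrt Real.pi_pos.le]

/-- Exactness of the rule on monomials of degree at most `4`, with the common factor `π ^ 2`
removed from the weights. -/
lemma cubature_monomial {a b c : ℝ} (ha : a ^ 2 = 1 / 2) (hb : b ^ 2 = 3 / 2) (hc : c = 2 * a)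
    (d : Fin 4 → ℕ) (hd : ∑ i, d i ≤ 4) :
    1 / 4 * (∏ i, (![0, 0, 0, 0] : Fin 4 → ℝ) i ^ d i)
      + 1 / 12 * ((∏ i, (![0, 0, 0, -c] : Fin 4 → ℝ) i ^ d i)
        + (∏ i, (![0, 0, c, 0] : Fin 4 → ℝ) i ^ d i)
        + (∏ i, (![b, 0, -a, 0] : Fin 4 → ℝ) i ^ d i)
        + (∏ i, (![-b, 0, -a, 0] : Fin 4 → ℝ) i ^ d i)
        + (∏ i, (![0, b, 0, a] : Fin 4 → ℝ) i ^ d i)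
        + (∏ i, (![0, -b, 0, a] : Fin 4 → ℝ) i ^ d i))
      + 1 / 36 * ((∏ i, (![b, b, a, -a] : Fin 4 → ℝ) i ^ d i)
        + (∏ i, (![b, -b, a, -a] : Fin 4 → ℝ) i ^ d i)
        + (∏ i, (![-b, b, a, -a] : Fin 4 → ℝ) i ^ d i)
        + (∏ i, (![-b, -b, a, -a] : Fin 4 → ℝ) i ^ d i)
        + (∏ i, (![0, b, -c, -a] : Fin 4 → ℝ) i ^ d i)
        + (∏ i, (![0, -b, -c, -a] : Fin 4 → ℝ) i ^ d i)
        + (∏ i, (![b, 0, a, c] : Fin 4 → ℝ) i ^ d i)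
        + (∏ i, (![-b, 0, a, c] : Fin 4 → ℝ) i ^ d i)
        + (∏ i, (![0, 0, -c, c] : Fin 4 → ℝ) i ^ d i))
      = ∏ i, gaussMoment (d i) := by
  have ha4 : a ^ 4 = 1 / 4 := by linear_combination (a ^ 2 + 1 / 2) * ha
  have hb4 : b ^ 4 = 9 / 4 := by linear_combination (b ^ 2 + 3 / 2) * hb
  subst hc
  simp only [Fin.prod_univ_four, Fin.sum_univ_four] at hd ⊢
  generalize d 0 = i at *
  generalize d 1 = j at *
  generalize d 2 = k at *
  generalize d 3 = l at *
  have hi : i ≤ 4 := by omega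
  have hj : j ≤ 4 - i := by omega
  have hk : k ≤ 4 - i - j := by omega
  have hl : l ≤ 4 - i - j - k := by omega
  clear hd
  interval_cases i <;> interval_cases j <;> interval_cases k <;> interval_cases l <;>
    simp [gaussMoment] <;> ring_nf <;> simp only [ha, ha4, hb, hb4] <;> ring_nf

/-- 16 point rule of degree 4 for `E_4^{r²}` (group 2). -/
theorem stmt_9 (a b c W0 W1 W2 : ℝ)
    (ha : a = Real.sqrt (1 / 2))
    (hb : b = Real.sqrt (3 / 2))
    (hc : c = Real.sqrt 2)
    (hW0 : W0 = Real.pi ^ 2 / 4)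
    (hW1 : W1 = Real.pi ^ 2 / 12)
    (hW2 : W2 = Real.pi ^ 2 / 36)
    :
    ∀ q : MvPolynomial (Fin 4) ℝ, q.totalDegree ≤ 4 →
      W0 * (MvPolynomial.eval ![0, 0, 0, 0] q)
        + W1 * (MvPolynomial.eval ![0, 0, 0, -c] q
          + MvPolynomial.eval ![0, 0, c, 0] q
          + MvPolynomial.eval ![b, 0, -a, 0] q
          + MvPolynomial.eval ![-b, 0, -a, 0] q
          + MvPolynomial.eval ![0, b, 0, a] q
          + MvPolynomial.eval ![0, -b, 0, a] q)
        + W2 * (MvPolynomial.eval ![b, b, a, -a] q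
          + MvPolynomial.eval ![b, -b, a, -a] q
          + MvPolynomial.eval ![-b, b, a, -a] q
          + MvPolynomial.eval ![-b, -b, a, -a] q
          + MvPolynomial.eval ![0, b, -c, -a] q
          + MvPolynomial.eval ![0, -b, -c, -a] q
          + MvPolynomial.eval ![b, 0, a, c] q
          + MvPolynomial.eval ![-b, 0, a, c] q
          + MvPolynomial.eval ![0, 0, -c, c] q)
        = ∫ x : Fin 4 → ℝ, Real.exp (-(∑ t, x t ^ 2)) * MvPolynomial.eval x q := by
  intro q hq
  have ha2 : a ^ 2 = 1 / 2 := by rw [ha, Real.sq_sqrt (by norm_num)]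
  have hb2 : b ^ 2 = 3 / 2 := by rw [hb, Real.sq_sqrt (by norm_num)]
  have hca : c = 2 * a := by
    rw [hc, ha, show (2 : ℝ) = 2 ^ 2 * (1 / 2) by norm_num, Real.sqrt_mul (by norm_num),
      Real.sqrt_sq (by norm_num)]
    norm_num
  have hint : ∫ x : Fin 4 → ℝ, Real.exp (-(∑ t, x t ^ 2)) * MvPolynomial.eval x q
      = ∑ d ∈ q.support, q.coeff d * (Real.pi ^ 2 * ∏ i, gaussMoment (d i)) := by
    simp only [MvPolynomial.eval_eq', Finset.mul_sum, mul_left_comm (Real.exp _)]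
    rw [integral_finsetSum _ fun d _ =>
      (integrable_exp_mul_monomial (fun i => d i)).const_mul (q.coeff d)]
    simp only [integral_const_mul, integral_exp_mul_monomial]
  rw [hint]
  simp only [MvPolynomial.eval_eq', ← Finset.sum_add_distrib, Finset.mul_sum]
  refine Finset.sum_congr rfl fun d hd => ?_
  have hdeg : ∑ i, d i ≤ 4 := by
    have h := (MvPolynomial.le_totalDegree hd).trans hq
    rwa [Finsupp.sum_fintype _ _ fun _ => rfl] at h
  rw [← cubature_monomial ha2 hb2 hca d hdeg, hW0, hW1, hW2]
  ring
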